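/- For every f ∈ C(S¹), the sums over the two-coloured sawtooth partition of unity recover f uniformly: ‖ Σ_{l=0}^{1} Σ_{j=1}^{k} f(δ_{j,k}^{(l)}) · ē_{j,k}^{(l)} − f ‖_∞ → 0 as k → ∞. Equivalently, with ψ_k := (⊕_{j} ev_{δ_{j,k}^{(0)}}) ⊕ (⊕_{j} ev_{δ_{j,k}^{(1)}}) : C(S¹) → ℂ^k ⊕ ℂ^k and φ_k(a⁰, a¹) := Σ_{j} a⁰_j ē_{j,k}^{(0)} + Σ_{j} a¹_j ē_{j,k}^{(1)}, the sequence (φ_k ∘ ψ_k)_k converges to the identity map of C(S¹) in the point-norm topology. -/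

import Mathlib

/-!
The sawtooth functions form a partition of unity in which every function is supported within
`1 / (2k)` of its node. Hence at each `z` the sum is a convex combination of values of `f` at
points close to `z`, and uniform continuity of `f` on the compact circle gives uniform convergence.

The partition of unity property is `sum_sawtooth`. The nodes `(2j + l) / (2k)` form the subgroup
`(2k)⁻¹ℤ/ℤ` of `ℝ/ℤ`, the image of `ZMod (2k)` under `ZMod.toAddCircle`; translating by it moves
any point into `[0, 1/(2k))`, where only the tents at the nodes `0` and `1/(2k)` are nonzero, and
these two add up to `1` (`sum_tent_of_lt`, `sum_tent`).
-/

/-!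
For every `f ∈ C(S¹)`, the sums over the two-coloured sawtooth partition of unity recover `f`
uniformly: `‖Σ_{l=0}^{1} Σ_{j=1}^{k} f(δ_{j,k}^{(l)}) · ē_{j,k}^{(l)} − f‖_∞ → 0` as `k → ∞`.
-/

open Filter

noncomputable section

/-- The point `δ_{j,k}^{(l)} = exp(2πi(2j+l)/(2k))` on the unit circle. -/
def sawtoothPoint (k j l : ℕ) : Circle :=
  Circle.exp (2 * Real.pi * ((2 * j + l) / (2 * k)))

/-- The sawtooth function `ē_{j,k}^{(l)}` on the circle:
`ē_{j,k}^{(l)}(e^{2πit}) = max (0, 1 − 2k · dist_{ℝ/ℤ}(t, (2j+l)/(2k)))`,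
where the distance is taken in `ℝ/ℤ`. -/
def sawtooth (k j l : ℕ) (z : Circle) : ℝ :=
  max 0 (1 - 2 * k *
    dist ((AddCircle.homeomorphCircle one_ne_zero).symm z)
      (((2 * j + l) / (2 * k) : ℝ) : AddCircle (1 : ℝ)))

/-- On `ZMod N ≃ N⁻¹ℤ/ℤ`, the tents of half-width `1 / N` sum to `1` at every point of
`[0, 1/N)`: only the nodes `0` and `1` contribute. -/
theorem sum_tent_of_lt {N : ℕ} [NeZero N] (hN : 2 ≤ N) {y : ℝ} (hy : 0 ≤ y) (hy1 : N * y < 1) :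
    ∑ j : ZMod N, max 0 (1 - N * dist (y : AddCircle (1 : ℝ)) (ZMod.toAddCircle j)) = 1 := by
  have hN' : (2 : ℝ) ≤ N := by exact_mod_cast hN
  have hN0 : (0 : ℝ) < N := by linarith
  have : Fact (1 < N) := ⟨hN⟩
  have half : 1 / (N : ℝ) ≤ 1 / 2 := one_div_le_one_div_of_le two_pos hN'
  have hyN : y < 1 / N := by rw [lt_div_iff₀ hN0]; linarith
  have h0 : dist (y : AddCircle (1 : ℝ)) (ZMod.toAddCircle (0 : ZMod N)) = y := by
    rw [map_zero, dist_zero_right, (AddCircle.norm_coe_eq_abs_iff (1 : ℝ) one_ne_zero).2,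
      abs_of_nonneg hy]
    rw [abs_of_nonneg hy, abs_one]; linarith
  have h1 : dist (y : AddCircle (1 : ℝ)) (ZMod.toAddCircle (1 : ZMod N)) = 1 / N - y := by
    have e : ZMod.toAddCircle (1 : ZMod N) = ((1 / N : ℝ) : AddCircle (1 : ℝ)) := by
      simpa using ZMod.toAddCircle_intCast (N := N) 1
    have a : |1 / (N : ℝ) - y| = 1 / N - y := abs_of_nonneg (by linarith)
    rw [e, dist_comm, dist_eq_norm, ← AddCircle.coe_sub,
      (AddCircle.norm_coe_eq_abs_iff (1 : ℝ) one_ne_zero).2, a]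
    rw [a, abs_one]; linarith
  rw [Fintype.sum_eq_add (0 : ZMod N) 1 zero_ne_one, h0, h1, max_eq_right, max_eq_right]
  · field_simp; ring
  · have : (N : ℝ) * (1 / N - y) = 1 - N * y := by field_simp
    nlinarith
  · linarith
  · rintro j ⟨hj0, hj1⟩
    obtain ⟨m, rfl⟩ := ZMod.intCast_surjective j
    apply max_eq_left
    rw [ZMod.toAddCircle_intCast, dist_eq_norm, ← AddCircle.coe_sub, AddCircle.norm_eq]
    generalize round ((1 : ℝ)⁻¹ * (y - m / N)) = r
    -- `q` represents the node `m`; it is neither `0` nor `1`, and `N y` lies in `[0, 1)`.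
    set q : ℤ := m + r * N with hq
    have hqm : (q : ZMod N) = m := by simp [hq]
    have hq0 : q ≠ 0 := fun h => hj0 (by rw [← hqm, h, Int.cast_zero])
    have hq1 : q ≠ 1 := fun h => hj1 (by rw [← hqm, h, Int.cast_one])
    have e : N * |y - m / N - r * 1| = |N * y - q| := by
      rw [← abs_of_pos hN0, ← abs_mul, abs_of_pos hN0, hq]
      congr 1
      push_cast
      field_simp
      ring
    rw [e]
    rcases (by omega : q ≤ -1 ∨ 2 ≤ q) with h | h
    · have : (q : ℝ) ≤ -1 := by exact_mod_cast h
      have := le_abs_self (N * y - q)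
      nlinarith
    · have : (2 : ℝ) ≤ q := by exact_mod_cast h
      have := neg_le_abs (N * y - q)
      linarith

/-- The tents of half-width `1 / N` sum to `1` everywhere, by translating a point by an element
of `N⁻¹ℤ/ℤ` into `[0, 1/N)`. -/
theorem sum_tent {N : ℕ} [NeZero N] (hN : 2 ≤ N) (x : AddCircle (1 : ℝ)) :
    ∑ j : ZMod N, max 0 (1 - N * dist x (ZMod.toAddCircle j)) = 1 := by
  obtain ⟨t, rfl⟩ := QuotientAddGroup.mk_surjective x
  have hN0 : (0 : ℝ) < N := by exact_mod_cast (by omega : 0 < N)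
  set n : ℤ := ⌊N * t⌋ with hn
  have hl : (n : ℝ) ≤ N * t := Int.floor_le _
  have hu : N * t < n + 1 := Int.lt_floor_add_one _
  have e : N * (t - n / N) = N * t - n := by field_simp
  have hy : 0 ≤ t - n / N := by
    rw [sub_nonneg, div_le_iff₀ hN0]; linarith
  refine Eq.trans ?_ (sum_tent_of_lt hN hy (by rw [e]; linarith))
  refine (Equiv.sum_comp (Equiv.addRight (n : ZMod N)) _).symm.trans ?_
  refine Finset.sum_congr rfl fun j _ => ?_
  rw [Equiv.coe_addRight, map_add, ZMod.toAddCircle_intCast, AddCircle.coe_sub, dist_eq_norm,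
    dist_eq_norm]
  congr 4
  abel

theorem sum_range_natCast_zmod {N : ℕ} [NeZero N] (G : ZMod N → ℝ) :
    ∑ m ∈ Finset.range N, G m = ∑ j : ZMod N, G j := by
  refine Finset.sum_bij' (fun m _ => (m : ZMod N)) (fun j _ => j.val) (fun _ _ => Finset.mem_univ _)
    (fun j _ => Finset.mem_range.2 (ZMod.val_lt j)) (fun m hm => ?_) (fun j _ => ?_)
    (fun _ _ => rfl)
  · exact ZMod.val_cast_of_lt (Finset.mem_range.1 hm)
  · exact ZMod.natCast_zmod_val j

/-- Even and odd indices `2 j + l` interleave to the consecutive indices `2, …, 2 k + 1`. -/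
theorem sum_two_colours (F : ℕ → ℝ) (k : ℕ) :
    ∑ l ∈ Finset.range 2, ∑ j ∈ Finset.Icc 1 k, F (2 * j + l) =
      ∑ m ∈ Finset.range (2 * k), F (m + 2) := by
  induction k with
  | zero => simp
  | succ k ih =>
    simp only [Finset.sum_range_succ, Finset.sum_range_zero, mul_add, mul_one,
      Finset.sum_Icc_succ_top (Nat.le_add_left 1 k)] at ih ⊢
    rw [← ih]
    ring_nf

theorem coe_sawtooth_node {k : ℕ} [NeZero (2 * k)] (j l : ℕ) :
    (((2 * j + l) / (2 * k) : ℝ) : AddCircle (1 : ℝ)) =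
      ZMod.toAddCircle ((2 * j + l : ℕ) : ZMod (2 * k)) := by
  have := ZMod.toAddCircle_intCast (N := 2 * k) (2 * j + l : ℕ)
  push_cast at this ⊢
  exact this.symm

theorem sum_sawtooth {k : ℕ} (hk : 1 ≤ k) (z : Circle) :
    ∑ l ∈ Finset.range 2, ∑ j ∈ Finset.Icc 1 k, sawtooth k j l z = 1 := by
  have : NeZero (2 * k) := ⟨by omega⟩
  set x := (AddCircle.homeomorphCircle one_ne_zero).symm z with hx
  set G : ZMod (2 * k) → ℝ :=
    fun j => max 0 (1 - (2 * k : ℕ) * dist x (ZMod.toAddCircle j)) with hG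
  have h : ∀ j l, sawtooth k j l z = G ((2 * j + l : ℕ) : ZMod (2 * k)) := fun j l => by
    rw [sawtooth, coe_sawtooth_node]
    simp only [hG, hx]
    push_cast
    rfl
  simp only [h]
  rw [sum_two_colours (fun m => G (m : ZMod (2 * k)))]
  simp only [Nat.cast_add]
  refine (sum_range_natCast_zmod (fun m => G (m + ((2 : ℕ) : ZMod (2 * k))))).trans ?_
  refine (Equiv.sum_comp (Equiv.addRight ((2 : ℕ) : ZMod (2 * k))) G).trans ?_
  exact sum_tent (by omega) x

theorem sawtoothPoint_eq (k j l : ℕ) :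
    sawtoothPoint k j l = AddCircle.homeomorphCircle one_ne_zero
      (((2 * j + l) / (2 * k) : ℝ) : AddCircle (1 : ℝ)) := by
  rw [AddCircle.homeomorphCircle_apply, AddCircle.toCircle_apply_mk, sawtoothPoint, div_one]

/-- **The two-coloured sawtooth partitions of unity recover every `f ∈ C(S¹)` uniformly**, i.e.
`φ_k ∘ ψ_k → id_{C(S¹)}` in the point-norm topology. -/
theorem tendsto_sawtooth_approximation (f : C(Circle, ℂ)) :
    Tendsto (fun k : ℕ =>
        ⨆ z : Circle,
          ‖(∑ l ∈ Finset.range 2, ∑ j ∈ Finset.Icc 1 k,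
              f (sawtoothPoint k j l) * (sawtooth k j l z : ℂ)) - f z‖)
      atTop (nhds 0) := by
  set φ := AddCircle.homeomorphCircle (one_ne_zero : (1 : ℝ) ≠ 0) with hφ
  have huc : UniformContinuous (f ∘ φ) :=
    CompactSpace.uniformContinuous_of_continuous (f.continuous.comp φ.continuous)
  rw [Metric.tendsto_atTop]
  intro ε hε
  obtain ⟨δ, hδ, hf⟩ := Metric.uniformContinuous_iff.1 huc (ε / 2) (half_pos hε)
  obtain ⟨n, hn⟩ := exists_nat_one_div_lt hδ
  refine ⟨n + 1, fun k hk => ?_⟩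
  have hnk : ((n : ℝ) + 1) ≤ k := by exact_mod_cast hk
  have hn0 : (0 : ℝ) < (n : ℝ) + 1 := by positivity
  have hkδ : 1 < δ * k := by
    rw [div_lt_iff₀ hn0] at hn
    nlinarith
  rw [dist_zero_right, Real.norm_of_nonneg (Real.iSup_nonneg fun _ => norm_nonneg _)]
  refine lt_of_le_of_lt (Real.iSup_le (fun z => ?_) (half_pos hε).le) (half_lt_self hε)
  have hsum := sum_sawtooth (le_trans (Nat.le_add_left 1 n) hk) z
  have key : ∀ l j : ℕ, ‖(f (sawtoothPoint k j l) - f z) * (sawtooth k j l z : ℂ)‖ ≤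
      ε / 2 * sawtooth k j l z := by
    intro l j
    have hw : 0 ≤ sawtooth k j l z := le_max_left _ _
    rw [norm_mul, Complex.norm_real, Real.norm_of_nonneg hw]
    rcases hw.eq_or_lt with h0 | hpos
    · simp [← h0]
    -- A nonzero weight forces `z` to be within `1 / (2 k) < δ` of the node.
    · refine mul_le_mul_of_nonneg_right ?_ hw
      have hd : dist (((2 * j + l) / (2 * k) : ℝ) : AddCircle (1 : ℝ)) (φ.symm z) < δ := by
        rw [sawtooth, lt_max_iff] at hpos
        have h := hpos.resolve_left (lt_irrefl _)
        rw [dist_comm] at h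
        by_contra! hc
        have := mul_le_mul_of_nonneg_left hc (by positivity : (0 : ℝ) ≤ k)
        nlinarith
      have := hf hd
      simp only [Function.comp_apply, Homeomorph.apply_symm_apply] at this
      rw [sawtoothPoint_eq, ← dist_eq_norm]
      exact this.le
  have hz : (∑ l ∈ Finset.range 2, ∑ j ∈ Finset.Icc 1 k,
        f (sawtoothPoint k j l) * (sawtooth k j l z : ℂ)) - f z =
      ∑ l ∈ Finset.range 2, ∑ j ∈ Finset.Icc 1 k,
        (f (sawtoothPoint k j l) - f z) * (sawtooth k j l z : ℂ) := by
    have hc : ∑ l ∈ Finset.range 2, ∑ j ∈ Finset.Icc 1 k, (sawtooth k j l z : ℂ) = 1 := by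
      exact_mod_cast hsum
    simp only [sub_mul, Finset.sum_sub_distrib, ← Finset.mul_sum, hc, mul_one]
  rw [hz]
  calc _ ≤ ∑ l ∈ Finset.range 2, ∑ j ∈ Finset.Icc 1 k, ε / 2 * sawtooth k j l z :=
        norm_sum_le_of_le _ fun l _ => norm_sum_le_of_le _ fun j _ => key l j
    _ = ε / 2 := by simp only [← Finset.mul_sum, hsum, mul_one]

end
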